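/- arXiv:1807.01186 — 6 statements merged into one kernel-verified Lean document; each statement's English description precedes it below -/
import Mathlib

section
/- Suppose Π ⊆ ℝ^d is a closed convex set with 0 ∈ Π, 𝔹 ⊆ ℝ^d is convex and compact, and Σ is a convex compact set of d×d real symmetric positive definite matrices. Then G admits a saddle point on Π × (𝔹 × Σ): there exist p* ∈ Π and (b*, S*) ∈ 𝔹 × Σ such that for every p ∈ Π and every (b, S) ∈ 𝔹 × Σ one has G(p; b*, S*) ≤ G(p*; b*, S*) ≤ G(p*; b, S). Moreover the saddle value satisfies G(p*; b*, S*) ≥ δr ≥ 0. -/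
open Matrix

lemma minimax_aux {E F : Type*} [NormedAddCommGroup E] [AddCommGroup F] [Module ℝ F]
    [TopologicalSpace F] [IsTopologicalAddGroup F] [ContinuousSMul ℝ F]
    (P : Set E) (hP : IsCompact P) (hPne : P.Nonempty)
    (K : Set F) (hK : IsCompact K) (hKc : Convex ℝ K) (hKne : K.Nonempty)
    (g : F → E → ℝ) (hg : Continuous (fun x : F × E => g x.1 x.2))
    (haff : ∀ x y p (t : ℝ), g ((1 - t) • x + t • y) p = (1 - t) * g x p + t * g y p)
    (huniq : ∀ x ∈ K, ∀ p ∈ P, ∀ q ∈ P, (∀ s ∈ P, g x s ≤ g x p) → (∀ s ∈ P, g x s ≤ g x q) →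
      p = q) :
    ∃ p ∈ P, ∃ x ∈ K, (∀ q ∈ P, g x q ≤ g x p) ∧ ∀ y ∈ K, g x p ≤ g y p := by
  have hgx : ∀ x, Continuous (g x) := fun x => hg.comp (by fun_prop : Continuous fun p => (x, p))
  have hmax : ∀ x, ∃ p ∈ P, ∀ q ∈ P, g x q ≤ g x p := fun x =>
    hP.exists_isMaxOn hPne (hgx x).continuousOn
  choose π hπP hπ using hmax
  have hV : Continuous (fun x => sSup (g x '' P)) := hP.continuous_sSup hg
  have hVe : ∀ x, sSup (g x '' P) = g x (π x) := by
    intro x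
    apply IsGreatest.csSup_eq
    refine ⟨⟨_, hπP x, rfl⟩, ?_⟩
    rintro _ ⟨q, hq, rfl⟩
    exact hπ x q hq
  simp only [hVe] at hV
  obtain ⟨x, hx, hmin⟩ := hK.exists_isMinOn hKne hV.continuousOn
  have hmin' : ∀ y ∈ K, g x (π x) ≤ g y (π y) := hmin
  refine ⟨π x, hπP x, x, hx, hπ x, fun y hy => ?_⟩
  let t : ℕ → ℝ := fun n => 1 / ((n : ℝ) + 1)
  have ht : Filter.Tendsto t Filter.atTop (nhds 0) := tendsto_one_div_add_atTop_nhds_zero_nat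
  have ht0 : ∀ n, 0 < t n := fun n => by positivity
  have ht1 : ∀ n, t n ≤ 1 := fun n => by
    simp only [t]; rw [div_le_one (by positivity)]; linarith [(Nat.cast_nonneg n : (0:ℝ) ≤ n)]
  let z : ℕ → F := fun n => (1 - t n) • x + t n • y
  have hz : ∀ n, z n ∈ K := fun n =>
    hKc hx hy (by linarith [ht1 n]) (ht0 n).le (by ring)
  have hzt : Filter.Tendsto z Filter.atTop (nhds x) := by
    have : Filter.Tendsto z Filter.atTop (nhds ((1 - (0:ℝ)) • x + (0:ℝ) • y)) :=
      ((tendsto_const_nhds.sub ht).smul_const x).add (ht.smul_const y)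
    simpa using this
  have hkey : ∀ n, g x (π x) ≤ g y (π (z n)) := by
    intro n
    have h1 := hmin' (z n) (hz n)
    have h2 : g (z n) (π (z n)) = _ := haff x y (π (z n)) (t n)
    have h3 := hπ x (π (z n)) (hπP _)
    have h4 : (1 - t n) * g x (π (z n)) ≤ (1 - t n) * g x (π x) :=
      mul_le_mul_of_nonneg_left h3 (by linarith [ht1 n])
    have h5 : t n * g x (π x) ≤ t n * g y (π (z n)) := by linarith
    exact le_of_mul_le_mul_left h5 (ht0 n)
  obtain ⟨q, hq, φ, hφ, hlim⟩ := hP.tendsto_subseq (fun n => hπP (z n))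
  have hA : Filter.Tendsto (fun n => g (z (φ n)) (π (z (φ n)))) Filter.atTop (nhds (g x q)) :=
    (hg.tendsto (x, q)).comp ((hzt.comp hφ.tendsto_atTop).prodMk_nhds hlim)
  have hB : g x (π x) ≤ g x q := ge_of_tendsto' hA fun n => hmin' _ (hz _)
  have hqe : π x = q := huniq x hx _ (hπP x) q hq (hπ x) fun s hs => (hπ x s hs).trans hB
  have hC : Filter.Tendsto (fun n => g y (π (z (φ n)))) Filter.atTop (nhds (g y q)) :=
    ((hgx y).tendsto q).comp hlim
  have hD : g x (π x) ≤ g y q := ge_of_tendsto' hC fun n => hkey _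
  rwa [← hqe] at hD

lemma quad_lower {d : ℕ} (Sset : Set (Matrix (Fin d) (Fin d) ℝ))
    (hScomp : IsCompact Sset) (hpos : ∀ S ∈ Sset, ∀ p : Fin d → ℝ, p ≠ 0 → 0 < p ⬝ᵥ S.mulVec p) :
    ∃ m : ℝ, 0 < m ∧ ∀ S ∈ Sset, ∀ p : Fin d → ℝ, m * ‖p‖ ^ 2 ≤ p ⬝ᵥ S.mulVec p := by
  have hc : IsCompact (Metric.sphere (0 : Fin d → ℝ) 1 ×ˢ Sset) := (isCompact_sphere _ _).prod hScomp
  have hcont : Continuous (fun x : (Fin d → ℝ) × Matrix (Fin d) (Fin d) ℝ =>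
    x.1 ⬝ᵥ x.2.mulVec x.1) := by fun_prop
  obtain ⟨m, hm, hmb⟩ : ∃ m : ℝ, 0 < m ∧ ∀ x ∈ Metric.sphere (0 : Fin d → ℝ) 1 ×ˢ Sset,
      m ≤ x.1 ⬝ᵥ x.2.mulVec x.1 := by
    rcases (Metric.sphere (0 : Fin d → ℝ) 1 ×ˢ Sset).eq_empty_or_nonempty with h | h
    · exact ⟨1, one_pos, by simp [h]⟩
    · obtain ⟨x, hx, hmin⟩ := hc.exists_isMinOn h hcont.continuousOn
      refine ⟨_, hpos x.2 hx.2 x.1 ?_, hmin⟩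
      have := hx.1
      intro h0
      simp [h0] at this
  refine ⟨m, hm, fun S hS p => ?_⟩
  by_cases hp : p = 0
  · simp [hp]
  have hn : 0 < ‖p‖ := norm_pos_iff.mpr hp
  have h := hmb (‖p‖⁻¹ • p, S) ⟨by simp [norm_smul, hn.ne'], hS⟩
  simp only [mulVec_smul, smul_dotProduct, dotProduct_smul, smul_eq_mul] at h
  calc m * ‖p‖ ^ 2 ≤ (‖p‖⁻¹ * (‖p‖⁻¹ * (p ⬝ᵥ S.mulVec p))) * ‖p‖ ^ 2 := by gcongr
    _ = _ := by field_simp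

lemma lin_upper {d : ℕ} (Bset : Set (Fin d → ℝ)) (hB : IsCompact Bset) (c : Fin d → ℝ) :
    ∃ C : ℝ, ∀ b ∈ Bset, ∀ p : Fin d → ℝ, p ⬝ᵥ (b - c) ≤ C * ‖p‖ := by
  have hcont : Continuous (fun b : Fin d → ℝ => ∑ i, |b i - c i|) := by fun_prop
  obtain ⟨C, hC⟩ := (hB.image hcont).bddAbove
  refine ⟨C, fun b hb p => ?_⟩
  have h1 : ∑ i, |b i - c i| ≤ C := hC ⟨b, hb, rfl⟩
  calc p ⬝ᵥ (b - c) = ∑ i, p i * (b i - c i) := rfl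
    _ ≤ ∑ i, ‖p‖ * |b i - c i| := by
        apply Finset.sum_le_sum
        intro i _
        calc p i * (b i - c i) ≤ |p i * (b i - c i)| := le_abs_self _
          _ = |p i| * |b i - c i| := abs_mul _ _
          _ ≤ _ := by gcongr; exact norm_le_pi_norm p i
    _ = ‖p‖ * ∑ i, |b i - c i| := by rw [Finset.mul_sum]
    _ ≤ ‖p‖ * C := by gcongr
    _ = _ := mul_comm _ _


/-- existence of a saddle point for
`G(p; b, S) = (1/2)δ(δ−1) pᵀ S p + δ pᵀ(b − r𝟙) + δ r` on `Π × (𝔹 × Σ)`,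
with saddle value `≥ δr ≥ 0`. -/
theorem stmt_0 (d : ℕ) (δ r : ℝ) (hδ : δ ∈ Set.Ioo (0 : ℝ) 1) (hr : 0 ≤ r)
    (Pset : Set (Fin d → ℝ)) (hPclosed : IsClosed Pset) (hPconv : Convex ℝ Pset)
    (hP0 : (0 : Fin d → ℝ) ∈ Pset)
    (Bset : Set (Fin d → ℝ)) (hBconv : Convex ℝ Bset) (hBcomp : IsCompact Bset)
    (hBne : Bset.Nonempty)
    (Sset : Set (Matrix (Fin d) (Fin d) ℝ)) (hSconv : Convex ℝ Sset)
    (hScomp : IsCompact Sset) (hSne : Sset.Nonempty)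
    (hSpd : ∀ S ∈ Sset, S.IsSymm ∧ S.PosDef)
    (G : (Fin d → ℝ) → (Fin d → ℝ) → Matrix (Fin d) (Fin d) ℝ → ℝ)
    (hG : ∀ p b S, G p b S =
      (1 / 2) * δ * (δ - 1) * (p ⬝ᵥ S.mulVec p)
        + δ * (p ⬝ᵥ (b - r • ((fun _ => (1 : ℝ)) : Fin d → ℝ))) + δ * r) :
    ∃ pstar ∈ Pset, ∃ bstar ∈ Bset, ∃ Sstar ∈ Sset,
      (∀ p ∈ Pset, ∀ b ∈ Bset, ∀ S ∈ Sset,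
        G p bstar Sstar ≤ G pstar bstar Sstar ∧ G pstar bstar Sstar ≤ G pstar b S) ∧
      δ * r ≤ G pstar bstar Sstar ∧ 0 ≤ δ * r := by
  obtain ⟨hδ0, hδ1⟩ := hδ
  have hpos : ∀ S ∈ Sset, ∀ p : Fin d → ℝ, p ≠ 0 → 0 < p ⬝ᵥ S.mulVec p := by
    intro S hS p hp
    simpa using (hSpd S hS).2.dotProduct_mulVec_pos hp
  obtain ⟨m, hm, hmb⟩ := quad_lower Sset hScomp hpos
  obtain ⟨C, hC⟩ := lin_upper Bset hBcomp (r • ((fun _ => (1 : ℝ)) : Fin d → ℝ))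
  have ha : 0 < (1 / 2) * δ * (1 - δ) := by
    have : 0 < 1 - δ := by linarith
    positivity
  set a := (1 / 2) * δ * (1 - δ) with hadef
  have ha' : (1 / 2) * δ * (δ - 1) = -a := by rw [hadef]; ring
  rw [ha'] at hG
  have hG0 : ∀ b S, G 0 b S = δ * r := by intro b S; simp [hG]
  have hout : ∀ b ∈ Bset, ∀ S ∈ Sset, ∀ p, δ * C / (a * m) < ‖p‖ → G p b S ≤ δ * r := by
    intro b hb S hS p hp
    rw [hG]
    rw [div_lt_iff₀ (by positivity)] at hp
    have h1 := mul_le_mul_of_nonneg_left (hmb S hS p) ha.le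
    have h2 := mul_le_mul_of_nonneg_left (hC b hb p) hδ0.le
    have h3 := mul_le_mul_of_nonneg_right hp.le (norm_nonneg p)
    nlinarith
  set R := max 0 (δ * C / (a * m)) with hR
  have hcontG : Continuous (fun x : ((Fin d → ℝ) × Matrix (Fin d) (Fin d) ℝ) × (Fin d → ℝ) =>
      G x.2 x.1.1 x.1.2) := by
    simp only [hG]; fun_prop
  obtain ⟨p, hp, ⟨b, S⟩, ⟨hb, hS⟩, h1, h2⟩ := minimax_aux (Pset ∩ Metric.closedBall 0 R)
    ((isCompact_closedBall _ _).inter_left hPclosed)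
    ⟨0, hP0, by simp [hR]⟩ (Bset ×ˢ Sset) (hBcomp.prod hScomp) (hBconv.prod hSconv)
    (hBne.prod hSne) (fun x p => G p x.1 x.2) hcontG
    (by
      intro x y p t
      simp only [hG, Prod.fst_add, Prod.snd_add, Prod.smul_fst, Prod.smul_snd, add_mulVec,
        smul_mulVec, dotProduct_add, dotProduct_sub, dotProduct_smul, smul_eq_mul]
      ring)
    (by
      rintro ⟨b, S⟩ ⟨hb, hS⟩ p hp q hq hpm hqm
      by_contra hne
      have hpq := hpos S hS (p - q) (sub_ne_zero.mpr hne)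
      have hmem : (1 / 2 : ℝ) • p + (1 / 2 : ℝ) • q ∈ Pset ∩ Metric.closedBall 0 R :=
        (hPconv.inter (convex_closedBall _ _)) hp hq (by norm_num) (by norm_num) (by norm_num)
      have e1 := hpm _ hmem
      have e2 := hqm _ hmem
      simp only [hG, mulVec_add, mulVec_sub, mulVec_smul, add_dotProduct, sub_dotProduct,
        smul_dotProduct, dotProduct_add, dotProduct_sub, dotProduct_smul, smul_eq_mul] at e1 e2 hpq
      have := mul_pos ha hpq
      nlinarith)
  simp only at h1 h2 hb hS
  have h0 : δ * r ≤ G p b S := by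
    have := h1 0 ⟨hP0, by simp [hR]⟩
    rwa [hG0] at this
  refine ⟨p, hp.1, b, hb, S, hS, fun q hq b' hb' S' hS' => ⟨?_, h2 (b', S') ⟨hb', hS'⟩⟩, h0,
    by positivity⟩
  by_cases hqR : ‖q‖ ≤ R
  · exact h1 q ⟨hq, by simpa using hqR⟩
  · exact (hout b hb S hS q (lt_of_le_of_lt (le_max_right _ _) (not_le.mp hqR))).trans h0
end

section
/- Let d = 1, δ ∈ (0,1), r ≥ 0, and let real numbers p̲ ≤ 0 ≤ p̄, b̲ ≤ b̄, and 0 ≤ Σ̲ ≤ Σ̄ with Σ̄ > 0 be given. Define p* = min{p̄, (b̲ − r)/((1−δ)Σ̄)} if r ≤ b̲, p* = max{p̲, (b̄ − r)/((1−δ)Σ̄)} if r ≥ b̄, and p* = 0 if b̲ < r < b̄; and define b* = b̲ if r ≤ b̲, b* = r if b̲ < r < b̄, and b* = b̄ if r ≥ b̄. Then (p*, (b*, Σ̄)) is a saddle point of G on [p̲, p̄] × ([b̲, b̄] × [Σ̲, Σ̄]): for every p ∈ [p̲, p̄], b ∈ [b̲, b̄] and S ∈ [Σ̲, Σ̄],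 G(p; b*, Σ̄) ≤ G(p*; b*, Σ̄) ≤ G(p*; b, S). -/
/-- explicit saddle point of
`G(p; b, S) = (1/2)δ(δ−1) S p² + δ p (b − r) + δ r`
on `[p̲, p̄] × ([b̲, b̄] × [Σ̲, Σ̄])` in dimension `d = 1`. -/
theorem stmt_7 (δ r pl pu bl bu Sl Su : ℝ) (hδ : δ ∈ Set.Ioo (0 : ℝ) 1) (hr : 0 ≤ r)
    (hpl : pl ≤ 0) (hpu : 0 ≤ pu) (hb : bl ≤ bu)
    (hSl : 0 ≤ Sl) (hSlu : Sl ≤ Su) (hSu : 0 < Su)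
    (G : ℝ → ℝ → ℝ → ℝ)
    (hG : ∀ p b S, G p b S = 1 / 2 * δ * (δ - 1) * S * p ^ 2 + δ * p * (b - r) + δ * r)
    (pstar bstar : ℝ)
    (hpstar : pstar = if r ≤ bl then min pu ((bl - r) / ((1 - δ) * Su))
      else if bu ≤ r then max pl ((bu - r) / ((1 - δ) * Su)) else 0)
    (hbstar : bstar = if r ≤ bl then bl else if bu ≤ r then bu else r) :
    ∀ p ∈ Set.Icc pl pu, ∀ b ∈ Set.Icc bl bu, ∀ S ∈ Set.Icc Sl Su,
      G p bstar Su ≤ G pstar bstar Su ∧ G pstar bstar Su ≤ G pstar b S := by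
  obtain ⟨h0, h1⟩ := hδ
  rintro p ⟨hp1, hp2⟩ b ⟨hb1, hb2⟩ S ⟨hS1, hS2⟩
  have hk : 0 < (1 - δ) * Su := mul_pos (by linarith) hSu
  have key : 0 ≤ (pstar - p) * ((bstar - r) - (1 - δ) * Su * pstar) ∧
      0 ≤ pstar * (b - bstar) := by
    rw [hpstar, hbstar]
    generalize (1 - δ) * Su = k at hk
    split_ifs with c1 c2
    · have hq : 0 ≤ (bl - r) / k := div_nonneg (by linarith) hk.le
      have e : k * ((bl - r) / k) = bl - r := by field_simp
      refine ⟨?_, mul_nonneg (le_min hpu hq) (by linarith)⟩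
      rcases le_total pu ((bl - r) / k) with h | h
      · rw [min_eq_left h]
        have := mul_le_mul_of_nonneg_left h hk.le
        exact mul_nonneg (by linarith) (by linarith)
      · rw [min_eq_right h, e]; simp
    · have hq : (bu - r) / k ≤ 0 := div_nonpos_of_nonpos_of_nonneg (by linarith) hk.le
      have e : k * ((bu - r) / k) = bu - r := by field_simp
      refine ⟨?_, mul_nonneg_of_nonpos_of_nonpos (max_le hpl hq) (by linarith)⟩
      rcases le_total pl ((bu - r) / k) with h | h
      · rw [max_eq_right h, e]; simp
      · rw [max_eq_left h]
        have := mul_le_mul_of_nonneg_left h hk.le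
        exact mul_nonneg_of_nonpos_of_nonpos (by linarith) (by linarith)
    · simp
  obtain ⟨hA, hB⟩ := key
  rw [hG, hG, hG]
  constructor
  · have t1 := mul_nonneg h0.le hA
    have t2 := mul_nonneg h0.le (mul_nonneg hk.le (sq_nonneg (pstar - p)))
    linarith
  · have t1 := mul_nonneg h0.le hB
    have t2 := mul_nonneg h0.le (mul_nonneg (mul_nonneg (sub_nonneg.2 h1.le)
      (sub_nonneg.2 hS2)) (sq_nonneg pstar))
    linarith
end

section
/- Let d = 1, δ ∈ (0,1), r ≥ 0, and let real numbers p̲ ≤ 0 ≤ p̄, b̲ ≤ b̄, and 0 ≤ Σ̲ ≤ Σ̄ with Σ̄ > 0 be given. Define b* = b̲ if r ≤ b̲, b* = r if b̲ < r < b̄, and b* = b̄ if r ≥ b̄, and define p* as in the explicit saddle-point formula (p* = min{p̄, (b̲−r)/((1−δ)Σ̄)} if r ≤ b̲, p* = max{p̲, (b̄−r)/((1−δ)Σ̄)} if r ≥ b̄, p* = 0 otherwise). Then the saddle value satisfies G(p*; b*, Σ̄) = (1/2)δ(δ−1) Σ̄ · dist²( [p̲, p̄], (b* − r)/((1−δ)Σ̄)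 ) + (1/2)(δ/(1−δ)) (b* − r)²/Σ̄ + δr, where dist([p̲,p̄], x) denotes the distance from the point x to the interval [p̲, p̄]. -/
lemma infDist_Icc_aux (a b x p : ℝ) (hp : p ∈ Set.Icc a b)
    (h : ∀ y ∈ Set.Icc a b, |x - p| ≤ |x - y|) :
    Metric.infDist x (Set.Icc a b) = |x - p| := by
  apply le_antisymm
  · have := Metric.infDist_le_dist_of_mem (x := x) hp
    rwa [Real.dist_eq] at this
  · rw [Metric.le_infDist ⟨p, hp⟩]
    intro y hy
    rw [Real.dist_eq]
    exact h y hy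

/-- the saddle value in dimension `d = 1` satisfies
`G(p*; b*, Σ̄) = (1/2)δ(δ−1) Σ̄ · dist²([p̲,p̄], (b*−r)/((1−δ)Σ̄))
  + (1/2)(δ/(1−δ)) (b*−r)²/Σ̄ + δr`. -/
theorem stmt_8 (δ r pl pu bl bu Sl Su : ℝ) (hδ : δ ∈ Set.Ioo (0 : ℝ) 1) (hr : 0 ≤ r)
    (hpl : pl ≤ 0) (hpu : 0 ≤ pu) (hb : bl ≤ bu)
    (hSl : 0 ≤ Sl) (hSlu : Sl ≤ Su) (hSu : 0 < Su)
    (G : ℝ → ℝ → ℝ → ℝ)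
    (hG : ∀ p b S, G p b S = 1 / 2 * δ * (δ - 1) * S * p ^ 2 + δ * p * (b - r) + δ * r)
    (pstar bstar : ℝ)
    (hpstar : pstar = if r ≤ bl then min pu ((bl - r) / ((1 - δ) * Su))
      else if bu ≤ r then max pl ((bu - r) / ((1 - δ) * Su)) else 0)
    (hbstar : bstar = if r ≤ bl then bl else if bu ≤ r then bu else r) :
    G pstar bstar Su
      = 1 / 2 * δ * (δ - 1) * Su *
          (Metric.infDist ((bstar - r) / ((1 - δ) * Su)) (Set.Icc pl pu)) ^ 2
        + 1 / 2 * (δ / (1 - δ)) * (bstar - r) ^ 2 / Su + δ * r := by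
  obtain ⟨h0, h1⟩ := hδ
  have hd : 0 < 1 - δ := by linarith
  have hc : 0 < (1 - δ) * Su := mul_pos hd hSu
  have key : Metric.infDist ((bstar - r) / ((1 - δ) * Su)) (Set.Icc pl pu)
      = |(bstar - r) / ((1 - δ) * Su) - pstar| := by
    by_cases c1 : r ≤ bl
    · rw [if_pos c1] at hpstar hbstar
      subst hbstar
      have hx : 0 ≤ (bstar - r) / ((1 - δ) * Su) := div_nonneg (by linarith) hc.le
      generalize (bstar - r) / ((1 - δ) * Su) = x at *
      apply infDist_Icc_aux
      · rw [hpstar]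
        exact ⟨le_min (by linarith) (by linarith), min_le_left _ _⟩
      · rintro y ⟨hy1, hy2⟩
        rcases le_total pu x with h | h
        · rw [min_eq_left h] at hpstar
          rw [hpstar, abs_of_nonneg (by linarith), abs_of_nonneg (by linarith)]
          linarith
        · rw [min_eq_right h] at hpstar
          simp [hpstar]
    · rw [if_neg c1] at hpstar hbstar
      by_cases c2 : bu ≤ r
      · rw [if_pos c2] at hpstar hbstar
        subst hbstar
        have hx : (bstar - r) / ((1 - δ) * Su) ≤ 0 :=
          div_nonpos_of_nonpos_of_nonneg (by linarith) hc.le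
        generalize (bstar - r) / ((1 - δ) * Su) = x at *
        apply infDist_Icc_aux
        · rw [hpstar]
          exact ⟨le_max_left _ _, max_le (by linarith) (by linarith)⟩
        · rintro y ⟨hy1, hy2⟩
          rcases le_total pl x with h | h
          · rw [max_eq_right h] at hpstar
            simp [hpstar]
          · rw [max_eq_left h] at hpstar
            rw [hpstar, abs_of_nonpos (by linarith), abs_of_nonpos (by linarith)]
            linarith
      · rw [if_neg c2] at hpstar hbstar
        apply infDist_Icc_aux
        · rw [hpstar]
          exact ⟨hpl, hpu⟩
        · intro y _
          simp [hpstar, hbstar]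
  rw [key, hG, sq_abs]
  have hd' := hd.ne'
  have hS' := hSu.ne'
  field_simp
  ring
end

section
/- Let Π ⊆ ℝ^d be a nonempty closed convex set, δ ∈ (0,1), r ≥ 0, σ an invertible d×d real matrix, and b, z ∈ ℝ^d. Set w = σ⁻¹(b − r𝟙) + z and v = w/(1−δ). Then sup over p ∈ Π of [ (1/2)δ(δ−1) pᵀ σσᵀ p + δ pᵀ(b − r𝟙) + δ pᵀ σ z ] = −(1/2)δ(1−δ) · dist²( v, σᵀΠ ) + (1/2)(δ/(1−δ)) ‖w‖², where σᵀΠ = { σᵀp : p ∈ Π }, dist(v, σᵀΠ) is the Euclidean distance from v to σᵀΠ, and ‖·‖ is the Euclidean norm. -/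
open Matrix

/-- Matrix–vector multiplication on Euclidean space. -/
noncomputable def mvE {d : ℕ} (M : Matrix (Fin d) (Fin d) ℝ) (v : EuclideanSpace ℝ (Fin d)) :
    EuclideanSpace ℝ (Fin d) :=
  (WithLp.equiv 2 (Fin d → ℝ)).symm (M.mulVec (WithLp.equiv 2 (Fin d → ℝ) v))

/-- Euclidean dot product `xᵀ y`. -/
noncomputable def dotE {d : ℕ} (x y : EuclideanSpace ℝ (Fin d)) : ℝ := ∑ i, x i * y i

theorem dotE_eq_inner {d : ℕ} (x y : EuclideanSpace ℝ (Fin d)) : dotE x y = inner ℝ x y := by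
  simp [dotE, PiLp.inner_apply, mul_comm]

theorem dotE_mvE {d : ℕ} (M : Matrix (Fin d) (Fin d) ℝ) (x y : EuclideanSpace ℝ (Fin d)) :
    dotE x (mvE M y) = dotE (mvE Mᵀ x) y := by
  change (WithLp.ofLp x) ⬝ᵥ (M *ᵥ (WithLp.ofLp y)) = (Mᵀ *ᵥ (WithLp.ofLp x)) ⬝ᵥ (WithLp.ofLp y)
  rw [Matrix.dotProduct_mulVec, Matrix.mulVec_transpose]

theorem mvE_mul {d : ℕ} (M N : Matrix (Fin d) (Fin d) ℝ) (x : EuclideanSpace ℝ (Fin d)) :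
    mvE (M * N) x = mvE M (mvE N x) := by
  simp [mvE, Matrix.mulVec_mulVec]

theorem mvE_one {d : ℕ} (x : EuclideanSpace ℝ (Fin d)) :
    mvE (1 : Matrix (Fin d) (Fin d) ℝ) x = x := by
  simp [mvE]

theorem mvE_add {d : ℕ} (M : Matrix (Fin d) (Fin d) ℝ) (x y : EuclideanSpace ℝ (Fin d)) :
    mvE M (x + y) = mvE M x + mvE M y := by
  simp [mvE, Matrix.mulVec_add]

/-- completion-of-squares identity,
`sup_{p ∈ Π} [ (1/2)δ(δ−1) pᵀσσᵀp + δ pᵀ(b−r𝟙) + δ pᵀσz ]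
  = −(1/2)δ(1−δ) dist²(v, σᵀΠ) + (1/2)(δ/(1−δ))‖w‖²`,
where `w = σ⁻¹(b − r𝟙) + z` and `v = w/(1−δ)`. -/
theorem stmt_9 (d : ℕ) (δ r : ℝ) (hδ : δ ∈ Set.Ioo (0 : ℝ) 1) (hr : 0 ≤ r)
    (σ : Matrix (Fin d) (Fin d) ℝ) (hσ : IsUnit σ.det)
    (Pset : Set (EuclideanSpace ℝ (Fin d))) (hPne : Pset.Nonempty)
    (hPclosed : IsClosed Pset) (hPconv : Convex ℝ Pset)
    (b z : EuclideanSpace ℝ (Fin d))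
    (ones : EuclideanSpace ℝ (Fin d)) (hones : ∀ i, ones i = 1)
    (w v : EuclideanSpace ℝ (Fin d))
    (hw : w = mvE σ⁻¹ (b - r • ones) + z)
    (hv : v = (1 / (1 - δ)) • w) :
    sSup ((fun p : EuclideanSpace ℝ (Fin d) =>
        1 / 2 * δ * (δ - 1) * dotE p (mvE (σ * σᵀ) p)
          + δ * dotE p (b - r • ones) + δ * dotE p (mvE σ z)) '' Pset)
      = -(1 / 2) * δ * (1 - δ) * (Metric.infDist v ((fun p => mvE σᵀ p) '' Pset)) ^ 2
        + 1 / 2 * (δ / (1 - δ)) * ‖w‖ ^ 2 := by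
  obtain ⟨h0, h1⟩ := hδ
  have h2 : 0 < 1 - δ := by linarith
  have hK : 0 < 1 / 2 * δ * (1 - δ) := by positivity
  have key : ∀ p : EuclideanSpace ℝ (Fin d),
      1 / 2 * δ * (δ - 1) * dotE p (mvE (σ * σᵀ) p)
          + δ * dotE p (b - r • ones) + δ * dotE p (mvE σ z)
      = -(1 / 2) * δ * (1 - δ) * (dist v (mvE σᵀ p)) ^ 2
        + 1 / 2 * (δ / (1 - δ)) * ‖w‖ ^ 2 := by
    intro p
    have e1 : mvE σ w = (b - r • ones) + mvE σ z := by
      rw [hw, mvE_add, ← mvE_mul, Matrix.mul_nonsing_inv _ hσ, mvE_one]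
    have e2 : dotE p (b - r • ones) + dotE p (mvE σ z) = inner ℝ (mvE σᵀ p) w := by
      rw [← dotE_eq_inner, ← dotE_mvE, e1]
      simp only [dotE_eq_inner, inner_add_right]
    have e3 : dotE p (mvE (σ * σᵀ) p) = ‖mvE σᵀ p‖ ^ 2 := by
      rw [mvE_mul, dotE_mvE, dotE_eq_inner, real_inner_self_eq_norm_sq]
    have e4 : (dist v (mvE σᵀ p)) ^ 2 = (1 / (1 - δ)) ^ 2 * ‖w‖ ^ 2
        - 2 * ((1 / (1 - δ)) * inner ℝ (mvE σᵀ p) w) + ‖mvE σᵀ p‖ ^ 2 := by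
      rw [dist_eq_norm, norm_sub_sq_real, hv, norm_smul, mul_pow, inner_smul_left,
        real_inner_comm]
      simp
    rw [add_assoc, ← mul_add, e2, e3, e4]
    field_simp
    ring
  have hne : ((fun p => mvE σᵀ p) '' Pset).Nonempty := hPne.image _
  apply IsLUB.csSup_eq _ (hPne.image _)
  constructor
  · rintro _ ⟨p, hp, rfl⟩
    simp only [key]
    have hle : Metric.infDist v ((fun p => mvE σᵀ p) '' Pset) ≤ dist v (mvE σᵀ p) :=
      Metric.infDist_le_dist_of_mem ⟨p, hp, rfl⟩
    have := pow_le_pow_left₀ Metric.infDist_nonneg hle 2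
    nlinarith [mul_le_mul_of_nonneg_left this hK.le]
  · intro u hu
    set C := 1 / 2 * (δ / (1 - δ)) * ‖w‖ ^ 2
    have hs : Real.sqrt ((C - u) / (1 / 2 * δ * (1 - δ)))
        ≤ Metric.infDist v ((fun p => mvE σᵀ p) '' Pset) := by
      rw [Metric.le_infDist hne]
      rintro _ ⟨p, hp, rfl⟩
      have := hu ⟨p, hp, rfl⟩
      simp only [key] at this
      apply Real.sqrt_le_iff.2 ⟨dist_nonneg, _⟩
      rw [div_le_iff₀ hK]
      linarith
    have := (Real.sqrt_le_iff.1 hs).2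
    rw [div_le_iff₀ hK] at this
    linarith
end

section
/- Let Π ⊆ ℝ^d be a closed convex set with 0 ∈ Π, δ ∈ (0,1), r ≥ 0, σ an invertible d×d real matrix, and let 𝔹 ⊆ ℝ^d be a nonempty convex compact set. Then for every z ∈ ℝ^d the function H(z; ·, ·) admits a saddle point on Π × 𝔹: there exist p* ∈ Π and b* ∈ 𝔹 such that H(z; p, b*) ≤ H(z; p*, b*) ≤ H(z; p*, b) for all p ∈ Π and b ∈ 𝔹. Moreover the saddle value satisfies H(z; p*, b*) ≥ δr ≥ 0. -/
open Matrix

open scoped RealInnerProductSpace in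
theorem saddle_aux {E : Type*} [NormedAddCommGroup E] [InnerProductSpace ℝ E]
    [FiniteDimensional ℝ E] (A B : E →ₗ[ℝ] E) (hBA : ∀ p, B (A p) = p) (k δ c : ℝ) (hk : 0 < k)
    (hδ : 0 < δ) (w : E) (P S : Set E) (hPc : IsClosed P) (hP : Convex ℝ P) (h0 : (0 : E) ∈ P)
    (hSne : S.Nonempty) (hS : Convex ℝ S) (hSc : IsCompact S) (H : E → E → ℝ)
    (hH : ∀ p b, H p b = -(k * ‖A p‖ ^ 2) + δ * ⟪p, b + w⟫ + c) :
    ∃ p ∈ P, ∃ b ∈ S, (∀ q ∈ P, ∀ a ∈ S, H q b ≤ H p b ∧ H p b ≤ H p a) ∧ c ≤ H p b := by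
  have hAc : Continuous A := A.continuous_of_finiteDimensional
  obtain ⟨M, hM⟩ := hSc.isBounded.exists_norm_le
  obtain ⟨s0, hs0⟩ := hSne
  have hM0 : 0 ≤ M := (norm_nonneg _).trans (hM s0 hs0)
  set K : ℝ := ‖LinearMap.toContinuousLinearMap B‖ + 1 with hK
  have hK0 : 0 < K := by positivity
  have hBn : ∀ p, ‖p‖ ≤ K * ‖A p‖ := fun p => by
    have h := (LinearMap.toContinuousLinearMap B).le_opNorm (A p)
    rw [LinearMap.coe_toContinuousLinearMap', hBA] at h
    have := norm_nonneg (A p)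
    nlinarith
  set R : ℝ := δ * (M + ‖w‖) * K ^ 2 / k with hR
  have hR0 : 0 ≤ R := by positivity
  have hRk : R * k = δ * (M + ‖w‖) * K ^ 2 := by rw [hR]; field_simp
  have hfar : ∀ p, R < ‖p‖ → ∀ b ∈ S, H p b ≤ c := by
    intro p hp b hb
    have h1 : ⟪p, b + w⟫ ≤ ‖p‖ * (M + ‖w‖) :=
      (real_inner_le_norm _ _).trans (mul_le_mul_of_nonneg_left
        ((norm_add_le _ _).trans (add_le_add_left (hM b hb) _)) (norm_nonneg _))
    have h2 : ‖p‖ ^ 2 ≤ K ^ 2 * ‖A p‖ ^ 2 := by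
      rw [← mul_pow]; exact pow_le_pow_left₀ (norm_nonneg _) (hBn p) 2
    have h3 : K ^ 2 * (δ * (‖p‖ * (M + ‖w‖))) ≤ K ^ 2 * (k * ‖A p‖ ^ 2) := by
      calc K ^ 2 * (δ * (‖p‖ * (M + ‖w‖))) = k * (R * ‖p‖) := by linear_combination -‖p‖ * hRk
        _ ≤ k * (‖p‖ * ‖p‖) := by gcongr
        _ = k * ‖p‖ ^ 2 := by ring
        _ ≤ k * (K ^ 2 * ‖A p‖ ^ 2) := by gcongr
        _ = _ := by ring
    have h4 := le_of_mul_le_mul_left h3 (by positivity)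
    have h5 := mul_le_mul_of_nonneg_left h1 hδ.le
    rw [hH]; linarith
  have hcx : ∀ b, ConcaveOn ℝ Set.univ (fun p => H p b) := by
    intro b
    have e1 : ConvexOn ℝ Set.univ (fun p : E => ‖A p‖ ^ 2) :=
      ((convexOn_univ_norm (E := E)).comp_linearMap A).pow (fun _ _ => norm_nonneg _) 2
    refine ⟨convex_univ, fun x _ y _ s t hs ht hst => ?_⟩
    have := e1.2 (Set.mem_univ x) (Set.mem_univ y) hs ht hst
    simp only [smul_eq_mul, hH, inner_add_left, inner_smul_left] at this ⊢
    simp only [conj_trivial]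
    have h6 := mul_le_mul_of_nonneg_left this hk.le
    have : c = s * c + t * c := by rw [← add_mul, hst, one_mul]
    linarith
  have hcv : ∀ p, ConvexOn ℝ Set.univ (fun b => H p b) := by
    intro p
    refine ⟨convex_univ, fun x _ y _ s t hs ht hst => le_of_eq ?_⟩
    simp only [smul_eq_mul, hH, inner_add_right, inner_smul_right]
    linear_combination (k * ‖A p‖ ^ 2 - δ * ⟪p, w⟫ - c) * hst
  obtain ⟨b, hb, p, hp, hbp⟩ := Sion.exists_isSaddlePointOn (X := S)
    (Y := P ∩ Metric.closedBall 0 R) (f := fun b p => H p b) ⟨s0, hs0⟩ hS hSc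
    (fun p _ => (Continuous.lowerSemicontinuous (by simp only [hH]; fun_prop)).lowerSemicontinuousOn _)
    (fun p _ => ((hcv p).subset (Set.subset_univ _) hS).quasiconvexOn)
    (hP.inter (convex_closedBall _ _)) ⟨0, h0, by simpa using hR0⟩
    ((isCompact_closedBall _ _).inter_left hPc)
    (fun b _ => (Continuous.upperSemicontinuous (by simp only [hH]; fun_prop)).upperSemicontinuousOn _)
    (fun b _ => ((hcx b).subset (Set.subset_univ _)
      (hP.inter (convex_closedBall _ _))).quasiconcaveOn)
  have hc : c ≤ H p b := by
    have := hbp b hb 0 ⟨h0, by simpa using hR0⟩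
    simpa [hH 0] using this
  refine ⟨p, hp.1, b, hb, fun q hq a ha => ⟨?_, hbp a ha p hp⟩, hc⟩
  by_cases hqR : ‖q‖ ≤ R
  · exact hbp b hb q ⟨hq, by simpa using hqR⟩
  · exact (hfar q (not_le.1 hqR) b hb).trans hc

/-- for every `z`, the function
`H(z; p, b) = (1/2)δ(δ−1) pᵀσσᵀp + δ pᵀ(b−r𝟙) + δ pᵀσz + δr`
admits a saddle point on `Π × 𝔹`, with saddle value `≥ δr ≥ 0`. -/
theorem stmt_12 (d : ℕ) (δ r : ℝ) (hδ : δ ∈ Set.Ioo (0 : ℝ) 1) (hr : 0 ≤ r)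
    (σ : Matrix (Fin d) (Fin d) ℝ) (hσ : IsUnit σ.det)
    (Pset : Set (EuclideanSpace ℝ (Fin d))) (hPclosed : IsClosed Pset)
    (hPconv : Convex ℝ Pset) (hP0 : (0 : EuclideanSpace ℝ (Fin d)) ∈ Pset)
    (Bset : Set (EuclideanSpace ℝ (Fin d))) (hBne : Bset.Nonempty)
    (hBconv : Convex ℝ Bset) (hBcomp : IsCompact Bset)
    (ones : EuclideanSpace ℝ (Fin d)) (hones : ∀ i, ones i = 1)
    (H : EuclideanSpace ℝ (Fin d) → EuclideanSpace ℝ (Fin d) →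
      EuclideanSpace ℝ (Fin d) → ℝ)
    (hH : ∀ z p b, H z p b = 1 / 2 * δ * (δ - 1) * dotE p (mvE (σ * σᵀ) p)
      + δ * dotE p (b - r • ones) + δ * dotE p (mvE σ z) + δ * r) :
    ∀ z : EuclideanSpace ℝ (Fin d), ∃ pstar ∈ Pset, ∃ bstar ∈ Bset,
      (∀ p ∈ Pset, ∀ b ∈ Bset,
        H z p bstar ≤ H z pstar bstar ∧ H z pstar bstar ≤ H z pstar b) ∧
      δ * r ≤ H z pstar bstar ∧ 0 ≤ δ * r := by
  intro z
  obtain ⟨hδ0, hδ1⟩ := hδ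
  have hdot : ∀ x y : EuclideanSpace ℝ (Fin d), dotE x y = inner ℝ x y := by
    intro x y
    simp [dotE, PiLp.inner_apply, mul_comm]
  have hBA : ∀ p, Matrix.toEuclideanLin (σᵀ)⁻¹ (Matrix.toEuclideanLin σᵀ p) = p := by
    intro p
    have : IsUnit (σᵀ).det := by rwa [Matrix.det_transpose]
    ext i
    simp [Matrix.toLpLin_apply, Matrix.mulVec_mulVec, Matrix.nonsing_inv_mul _ this]
  have hq : ∀ p : EuclideanSpace ℝ (Fin d), dotE p (mvE (σ * σᵀ) p)
      = ‖Matrix.toEuclideanLin σᵀ p‖ ^ 2 := by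
    intro p
    rw [EuclideanSpace.real_norm_sq_eq]
    change p.ofLp ⬝ᵥ ((σ * σᵀ) *ᵥ p.ofLp) = _
    rw [← Matrix.mulVec_mulVec, Matrix.dotProduct_mulVec, ← Matrix.mulVec_transpose]
    simp [dotProduct, Matrix.toLpLin_apply, sq]
  obtain ⟨p, hp, b, hb, h, hc⟩ := saddle_aux (Matrix.toEuclideanLin σᵀ)
    (Matrix.toEuclideanLin (σᵀ)⁻¹) hBA (1 / 2 * δ * (1 - δ)) δ (δ * r)
    (by have := sub_pos.2 hδ1; positivity) hδ0 (-(r • ones) + mvE σ z) Pset Bset hPclosed hPconv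
    hP0 hBne hBconv hBcomp (H z) (by
      intro p b
      rw [hH, hq, hdot, hdot, inner_add_right, inner_add_right, inner_sub_right, inner_neg_right]
      ring)
  exact ⟨p, hp, b, hb, h, hc, mul_nonneg hδ0.le hr⟩
end

section
/- Let Π ⊆ ℝ^d be a closed convex set with 0 ∈ Π, δ ∈ (0,1), r ≥ 0, σ an invertible d×d real matrix, and 𝔹 ⊆ ℝ^d a nonempty compact set. Define, for z ∈ ℝ^d, h(z) = inf over b ∈ 𝔹 of [ −(1/2)δ(1−δ) · dist²( (σ⁻¹(b − r𝟙) + z)/(1−δ), σᵀΠ ) + (1/2)(δ/(1−δ)) ‖σ⁻¹(b − r𝟙) + z‖² ] + δr, where σᵀΠ = { σᵀp : p ∈ Π }. Then there exists a constant K > 0 such that for all z₁, z₂ ∈ ℝ^d, |h(z₁) − h(z₂)| ≤ K (1 + ‖z₁‖ + ‖z₂‖) ‖z₁ − z₂‖, and |h(0)| ≤ K. -/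
open Matrix

theorem aux_G {E : Type*} [NormedAddCommGroup E] [NormedSpace ℝ E] (δ : ℝ) (h0 : 0 < δ) (h1 : δ < 1)
    (S : Set E) (hS : (0 : E) ∈ S) (u v : E) :
    (-(1 / 2) * δ * (1 - δ) * (Metric.infDist ((1 / (1 - δ)) • u) S) ^ 2
        + 1 / 2 * (δ / (1 - δ)) * ‖u‖ ^ 2) ≤
    (-(1 / 2) * δ * (1 - δ) * (Metric.infDist ((1 / (1 - δ)) • v) S) ^ 2
        + 1 / 2 * (δ / (1 - δ)) * ‖v‖ ^ 2) + δ / (1 - δ) * (‖u‖ + ‖v‖) * ‖u - v‖ := by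
  have hd : 0 < 1 - δ := by linarith
  have hc : 0 < 1 / (1 - δ) := by positivity
  have hb : ∀ w : E, Metric.infDist ((1 / (1 - δ)) • w) S ≤ 1 / (1 - δ) * ‖w‖ := by
    intro w
    have := Metric.infDist_le_dist_of_mem (x := (1 / (1 - δ)) • w) hS
    rwa [dist_zero_right, norm_smul, Real.norm_of_nonneg hc.le] at this
  have hl : Metric.infDist ((1 / (1 - δ)) • v) S ≤
      Metric.infDist ((1 / (1 - δ)) • u) S + 1 / (1 - δ) * ‖u - v‖ := by
    have := Metric.infDist_le_infDist_add_dist (s := S) (x := (1 / (1 - δ)) • v)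
      (y := (1 / (1 - δ)) • u)
    rwa [dist_comm, dist_eq_norm, ← smul_sub, norm_smul, Real.norm_of_nonneg hc.le] at this
  have hn : ‖u‖ ≤ ‖v‖ + ‖u - v‖ := by
    have := norm_add_le v (u - v)
    simpa using this
  have hbu := hb u
  have hbv := hb v
  have p1 := Metric.infDist_nonneg (x := (1 / (1 - δ)) • u) (s := S)
  have p2 := Metric.infDist_nonneg (x := (1 / (1 - δ)) • v) (s := S)
  have n1 := norm_nonneg u
  have n2 := norm_nonneg v
  have n3 := norm_nonneg (u - v)
  have e : δ / (1 - δ) = δ * (1 - δ) * (1 / (1 - δ)) ^ 2 := by field_simp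
  have e2 : 1 / 2 * (δ / (1 - δ)) * ‖u‖ ^ 2 ≤ 1 / 2 * (δ / (1 - δ)) * ‖v‖ ^ 2 +
      1 / 2 * (δ / (1 - δ)) * ((‖u‖ + ‖v‖) * ‖u - v‖) := by
    rw [← mul_add]
    apply mul_le_mul_of_nonneg_left _ (by positivity)
    nlinarith [mul_nonneg (add_nonneg n1 n2) (sub_nonneg.2 hn)]
  generalize Metric.infDist ((1 / (1 - δ)) • u) S = a at *
  generalize Metric.infDist ((1 / (1 - δ)) • v) S = b at *
  generalize 1 / (1 - δ) = c at *
  have e3 : b ^ 2 - a ^ 2 ≤ c ^ 2 * ((‖u‖ + ‖v‖) * ‖u - v‖) := by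
    have q1 : (b + a) * (b - a) ≤ (b + a) * (c * ‖u - v‖) :=
      mul_le_mul_of_nonneg_left (by linarith) (by linarith)
    have q2 : (b + a) * (c * ‖u - v‖) ≤ (c * ‖v‖ + c * ‖u‖) * (c * ‖u - v‖) :=
      mul_le_mul_of_nonneg_right (by linarith) (by positivity)
    nlinarith
  have e4 := mul_le_mul_of_nonneg_left e3 (by positivity : 0 ≤ 1 / 2 * δ * (1 - δ))
  have e5 : 1 / 2 * δ * (1 - δ) * (c ^ 2 * ((‖u‖ + ‖v‖) * ‖u - v‖)) =
      1 / 2 * (δ / (1 - δ)) * ((‖u‖ + ‖v‖) * ‖u - v‖) := by rw [e]; ring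
  rw [e5] at e4
  linarith

theorem aux_inf {E : Type*} [NormedAddCommGroup E] [NormedSpace ℝ E] (C : ℝ) (hC : 0 ≤ C)
    (G : E → ℝ) (hG0 : G 0 = 0)
    (hG : ∀ u v, G u ≤ G v + C * (‖u‖ + ‖v‖) * ‖u - v‖)
    {X : Type*} (B : Set X) (hB : B.Nonempty) (m : X → E) (M : ℝ) (hM0 : 0 ≤ M)
    (hM : ∀ b ∈ B, ‖m b‖ ≤ M) (t : ℝ) (ht : 0 ≤ t) (h : E → ℝ)
    (hh : ∀ z, h z = sInf ((fun b => G (m b + z)) '' B) + t) :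
    ∃ K > 0, (∀ z₁ z₂ : E,
      |h z₁ - h z₂| ≤ K * (1 + ‖z₁‖ + ‖z₂‖) * ‖z₁ - z₂‖) ∧ |h 0| ≤ K := by
  have hbelow : ∀ z, BddBelow ((fun b => G (m b + z)) '' B) := by
    intro z
    refine ⟨-(C * (M + ‖z‖) * (M + ‖z‖)), ?_⟩
    rintro _ ⟨b, hb, rfl⟩
    have h1 := hG 0 (m b + z)
    have h2 : ‖m b + z‖ ≤ M + ‖z‖ := (norm_add_le _ _).trans (by linarith [hM b hb])
    simp only [hG0, norm_zero, zero_add, zero_sub, norm_neg] at h1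
    have : C * ‖m b + z‖ * ‖m b + z‖ ≤ C * (M + ‖z‖) * (M + ‖z‖) := by gcongr
    simp only
    linarith
  have key : ∀ z₁ z₂, h z₁ - h z₂ ≤ C * (2 * M + ‖z₁‖ + ‖z₂‖) * ‖z₁ - z₂‖ := by
    intro z₁ z₂
    rw [hh, hh]
    have : sInf ((fun b => G (m b + z₁)) '' B) - C * (2 * M + ‖z₁‖ + ‖z₂‖) * ‖z₁ - z₂‖ ≤
        sInf ((fun b => G (m b + z₂)) '' B) := by
      apply le_csInf (hB.image _)
      rintro _ ⟨b, hb, rfl⟩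
      have h1 := csInf_le (hbelow z₁) (Set.mem_image_of_mem _ hb)
      have h2 := hG (m b + z₁) (m b + z₂)
      rw [add_sub_add_left_eq_sub] at h2
      have h3 : ‖m b + z₁‖ + ‖m b + z₂‖ ≤ 2 * M + ‖z₁‖ + ‖z₂‖ := by
        linarith [hM b hb, norm_add_le (m b) z₁, norm_add_le (m b) z₂]
      have h4 : C * (‖m b + z₁‖ + ‖m b + z₂‖) * ‖z₁ - z₂‖ ≤
        C * (2 * M + ‖z₁‖ + ‖z₂‖) * ‖z₁ - z₂‖ := by gcongr
      simp only at h1 ⊢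
      linarith
    linarith
  refine ⟨C * (2 * M + 1) + |h 0| + 1, by positivity, ?_, ?_⟩
  · intro z₁ z₂
    have hle : C * (2 * M + ‖z₁‖ + ‖z₂‖) * ‖z₁ - z₂‖ ≤
        (C * (2 * M + 1) + |h 0| + 1) * (1 + ‖z₁‖ + ‖z₂‖) * ‖z₁ - z₂‖ := by
      apply mul_le_mul_of_nonneg_right _ (norm_nonneg _)
      have a1 : C * (2 * M + ‖z₁‖ + ‖z₂‖) ≤ C * (2 * M + 1) * (1 + ‖z₁‖ + ‖z₂‖) := by
        rw [mul_assoc]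
        apply mul_le_mul_of_nonneg_left _ hC
        nlinarith [mul_nonneg hM0 (norm_nonneg z₁), mul_nonneg hM0 (norm_nonneg z₂)]
      have a2 : 0 ≤ (|h 0| + 1) * (1 + ‖z₁‖ + ‖z₂‖) := by positivity
      linarith
    rw [abs_le]
    have k1 := key z₁ z₂
    have k2 := key z₂ z₁
    rw [norm_sub_rev z₂ z₁, add_right_comm] at k2
    constructor <;> linarith
  · have : 0 ≤ C * (2 * M + 1) := by positivity
    linarith

/-- the saddle value function
`h(z) = inf_{b ∈ 𝔹} [ −(1/2)δ(1−δ) dist²((σ⁻¹(b−r𝟙)+z)/(1−δ), σᵀΠ)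
  + (1/2)(δ/(1−δ))‖σ⁻¹(b−r𝟙)+z‖² ] + δr`
satisfies `|h(z₁) − h(z₂)| ≤ K(1 + ‖z₁‖ + ‖z₂‖)‖z₁ − z₂‖` and `|h(0)| ≤ K`
for some constant `K > 0`. -/
theorem stmt_14 (d : ℕ) (δ r : ℝ) (hδ : δ ∈ Set.Ioo (0 : ℝ) 1) (hr : 0 ≤ r)
    (σ : Matrix (Fin d) (Fin d) ℝ) (hσ : IsUnit σ.det)
    (Pset : Set (EuclideanSpace ℝ (Fin d))) (hPclosed : IsClosed Pset)
    (hPconv : Convex ℝ Pset) (hP0 : (0 : EuclideanSpace ℝ (Fin d)) ∈ Pset)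
    (Bset : Set (EuclideanSpace ℝ (Fin d))) (hBne : Bset.Nonempty)
    (hBcomp : IsCompact Bset)
    (ones : EuclideanSpace ℝ (Fin d)) (hones : ∀ i, ones i = 1)
    (h : EuclideanSpace ℝ (Fin d) → ℝ)
    (hh : ∀ z, h z = sInf ((fun b : EuclideanSpace ℝ (Fin d) =>
        -(1 / 2) * δ * (1 - δ) *
          (Metric.infDist ((1 / (1 - δ)) • (mvE σ⁻¹ (b - r • ones) + z))
            ((fun p => mvE σᵀ p) '' Pset)) ^ 2
        + 1 / 2 * (δ / (1 - δ)) * ‖mvE σ⁻¹ (b - r • ones) + z‖ ^ 2) '' Bset)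
      + δ * r) :
    ∃ K > 0, (∀ z₁ z₂ : EuclideanSpace ℝ (Fin d),
      |h z₁ - h z₂| ≤ K * (1 + ‖z₁‖ + ‖z₂‖) * ‖z₁ - z₂‖) ∧ |h 0| ≤ K := by
  have hd : 0 < 1 - δ := by linarith [hδ.2]
  have h0 := hδ.1
  have hS : (0 : EuclideanSpace ℝ (Fin d)) ∈ (fun p => mvE σᵀ p) '' Pset :=
    ⟨0, hP0, by ext i; simp [mvE]⟩
  have hcont : Continuous (fun b : EuclideanSpace ℝ (Fin d) => mvE σ⁻¹ (b - r • ones)) := by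
    have : Continuous (fun b : EuclideanSpace ℝ (Fin d) =>
        Matrix.toEuclideanLin σ⁻¹ (b - r • ones)) :=
      (LinearMap.continuous_of_finiteDimensional _).comp (by fun_prop)
    exact this
  obtain ⟨M, hM⟩ := hBcomp.exists_bound_of_continuousOn hcont.continuousOn
  obtain ⟨b0, hb0⟩ := hBne
  refine aux_inf (δ / (1 - δ)) (by positivity)
    (fun u => -(1 / 2) * δ * (1 - δ) *
          (Metric.infDist ((1 / (1 - δ)) • u) ((fun p => mvE σᵀ p) '' Pset)) ^ 2
        + 1 / 2 * (δ / (1 - δ)) * ‖u‖ ^ 2) ?_ ?_ Bset ⟨b0, hb0⟩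
    (fun b => mvE σ⁻¹ (b - r • ones)) M ((norm_nonneg _).trans (hM b0 hb0)) hM (δ * r)
    (by positivity) h hh
  · simp [Metric.infDist_zero_of_mem hS]
  · intro u v
    exact aux_G δ h0 hδ.2 _ hS u v
end
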